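/- arXiv:math/0609794 — 3 statements merged into one kernel-verified Lean document; each statement's English description precedes it below -/
import Mathlib

section
/- Let (X,T) be a distal and transitive topological dynamical system (hence minimal). Then the doubly regionally proximal relation RP² on X is a closed equivalence relation, and moreover RP² coincides with the strongly doubly regionally proximal relation RP²ₛ. -/
open Filter Topology

/-- The `n`-th iterate (`n : ℤ`) of a homeomorphism `T : X → X`. -/
def iterZ {X : Type*} [TopologicalSpace X] (T : X ≃ₜ X) (n : ℤ) : X → X :=
  fun x => (T.toEquiv ^ n) x

section Defs

variable {X : Type*} [TopologicalSpace X]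

/-- The set of parallelograms `𝒫`: the closure in `X⁴` of
`{(x, Tᵐx, Tⁿx, Tᵐ⁺ⁿx) : x ∈ X, m, n ∈ ℤ}`. -/
def Para (T : X ≃ₜ X) : Set (X × X × X × X) :=
  closure {q | ∃ (x : X) (m n : ℤ),
    q = (x, iterZ T m x, iterZ T n x, iterZ T (m + n) x)}

/-- The set of parallelepipeds `𝒬`: the closure in `X⁸ = X⁴ × X⁴` of
`{(x, Tᵐx, Tⁿx, Tᵐ⁺ⁿx, Tᵖx, Tᵐ⁺ᵖx, Tⁿ⁺ᵖx, Tᵐ⁺ⁿ⁺ᵖx) : x ∈ X, m, n, p ∈ ℤ}`. -/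
def Pip (T : X ≃ₜ X) : Set ((X × X × X × X) × (X × X × X × X)) :=
  closure {q | ∃ (x : X) (m n p : ℤ),
    q = ((x, iterZ T m x, iterZ T n x, iterZ T (m + n) x),
         (iterZ T p x, iterZ T (m + p) x, iterZ T (n + p) x, iterZ T (m + n + p) x))}

end Defs

section MetricDefs

variable {X : Type*} [MetricSpace X]

/-- `(X, T)` is transitive: some point has dense orbit `{Tⁿx : n ∈ ℤ}`. -/
def IsTransitive (T : X ≃ₜ X) : Prop :=
  ∃ x : X, Dense (Set.range fun n : ℤ => iterZ T n x)

/-- `(X, T)` is minimal: every point has dense orbit. -/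
def IsMinimal (T : X ≃ₜ X) : Prop :=
  ∀ x : X, Dense (Set.range fun n : ℤ => iterZ T n x)

/-- `(x, y)` is a proximal pair: `inf_{n ∈ ℤ} d(Tⁿx, Tⁿy) = 0`. -/
def ProximalPair (T : X ≃ₜ X) (x y : X) : Prop :=
  ⨅ n : ℤ, dist (iterZ T n x) (iterZ T n y) = 0

/-- `(X, T)` is distal: every pair of distinct points is distal,
i.e. `inf_{n ∈ ℤ} d(Tⁿx, Tⁿy) > 0`. -/
def IsDistal (T : X ≃ₜ X) : Prop :=
  ∀ x y : X, x ≠ y → 0 < ⨅ n : ℤ, dist (iterZ T n x) (iterZ T n y)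

/-- The regionally proximal relation `RP`. -/
def RP (T : X ≃ₜ X) (x y : X) : Prop :=
  ∀ ε > 0, ∃ x' y' : X, ∃ n : ℤ,
    dist x' x < ε ∧ dist y' y < ε ∧ dist (iterZ T n x') (iterZ T n y') < ε

/-- The doubly regionally proximal relation `RP²`. -/
def RP2 (T : X ≃ₜ X) (x y : X) : Prop :=
  ∀ ε > 0, ∃ x' y' : X, ∃ m n : ℤ,
    dist x' x < ε ∧ dist y' y < ε ∧
    dist (iterZ T m x') (iterZ T m y') < ε ∧
    dist (iterZ T n x') (iterZ T n y') < ε ∧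
    dist (iterZ T (m + n) x') (iterZ T (m + n) y') < ε

/-- The strongly doubly regionally proximal relation `RP²ₛ`. -/
def RP2S (T : X ≃ₜ X) (x y : X) : Prop :=
  ∀ ε > 0, ∃ x' y' : X, ∃ m n : ℤ,
    dist x' x < ε ∧ dist y' y < ε ∧
    dist (iterZ T m x') y < ε ∧ dist (iterZ T n x') y < ε ∧
    dist (iterZ T (m + n) x') y < ε ∧
    dist (iterZ T m y') y < ε ∧ dist (iterZ T n y') y < ε ∧
    dist (iterZ T (m + n) y') y < ε

end MetricDefs

open Set AddAction Uniformity Function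

/- Let `𝒬 ⊆ X⁸` be the closed set of dynamical cubes. In a minimal system `𝒬` is the orbit closure
of any constant point under the Host–Kra cube group. Distality passes to products and, since the
only idempotent of the Ellis semigroup is then the identity, orbit closures in `X⁸` are minimal;
this is what allows two cubes to be glued along a common face. By compactness, a pair in `RP²`
yields a cube with faces `x a b c` and `y a b c`, and gluing degenerate cubes to it turns every
vertex but `x` into `y`. Such a cube says precisely that `(x, y)` is in `RP²ₛ`. Closedness of `RP²`
is then that of `𝒬`, and transitivity comes from gluing the cube `x y y y y y y y` to
`y y y y z y y y`. -/

section OrbitClosure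

variable {M Y Z : Type*} [AddMonoid M] [AddAction M Y] [TopologicalSpace Y]

theorem map_mem_closure_orbit {N : Type*} [AddMonoid N] [AddAction N Z] [TopologicalSpace Z]
    {f : Y → Z} {y z : Y} (hf : Continuous f)
    (hfy : ∀ g : M, ∃ k : N, f (g +ᵥ y) = k +ᵥ f y) (hz : z ∈ closure (orbit M y)) :
    f z ∈ closure (orbit N (f y)) := by
  refine map_mem_closure hf hz ?_
  rintro _ ⟨g, rfl⟩
  obtain ⟨k, hk⟩ := hfy g
  exact ⟨k, hk.symm⟩

theorem exists_mem_closure_orbit_map_eq [AddAction M Z] [TopologicalSpace Z] [CompactSpace Y]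
    [T2Space Z] {f : Y → Z} {y : Y} {z : Z} (hf : Continuous f)
    (hfy : ∀ g : M, f (g +ᵥ y) = g +ᵥ f y) (hz : z ∈ closure (orbit M (f y))) :
    ∃ w ∈ closure (orbit M y), f w = z := by
  have horbit : orbit M (f y) = f '' orbit M y := by
    simp only [orbit, ← range_comp, Function.comp_def, hfy]
  rw [horbit] at hz
  exact hf.isClosedMap.closure_image_subset _ hz

theorem mem_closure_orbit_trans [ContinuousConstVAdd M Y] {x y z : Y}
    (hxy : y ∈ closure (orbit M x)) (hyz : z ∈ closure (orbit M y)) :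
    z ∈ closure (orbit M x) := by
  refine closure_minimal ?_ isClosed_closure hyz
  rintro _ ⟨g, rfl⟩
  exact vadd_closure_orbit_subset g x (vadd_mem_vadd_set hxy)

variable (M Y) in
/-- The Ellis (enveloping) semigroup of an action: the pointwise closure of the set of maps
`y ↦ g +ᵥ y`, obtained as the orbit closure of the identity for the action on `Y → Y`. -/
def envelopingSemigroup : Set (Y → Y) :=
  closure (orbit M id)

theorem comp_mem_envelopingSemigroup [ContinuousConstVAdd M Y] {u v : Y → Y}
    (hu : u ∈ envelopingSemigroup M Y) (hv : v ∈ envelopingSemigroup M Y) :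
    u ∘ v ∈ envelopingSemigroup M Y :=
  mem_closure_orbit_trans hv <|
    map_mem_closure_orbit (f := fun w : Y → Y ↦ w ∘ v)
      (continuous_pi fun y ↦ continuous_apply (v y)) (fun g ↦ ⟨g, rfl⟩) hu

theorem apply_mem_closure_orbit {u : Y → Y} (hu : u ∈ envelopingSemigroup M Y) (y : Y) :
    u y ∈ closure (orbit M y) :=
  map_mem_closure_orbit (f := fun w : Y → Y ↦ w y) (continuous_apply y) (fun g ↦ ⟨g, rfl⟩) hu

theorem exists_mem_envelopingSemigroup_apply_eq [CompactSpace Y] [T2Space Y] {y z : Y}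
    (hz : z ∈ closure (orbit M y)) : ∃ u ∈ envelopingSemigroup M Y, u y = z :=
  exists_mem_closure_orbit_map_eq (f := fun w : Y → Y ↦ w y) (continuous_apply y)
    (fun _ ↦ rfl) hz

theorem exists_comp_self_eq_of_isCompact [T2Space Y] {S : Set (Y → Y)} (hne : S.Nonempty)
    (hS : IsCompact S) (hcomp : ∀ u ∈ S, ∀ v ∈ S, u ∘ v ∈ S) : ∃ u ∈ S, u ∘ u = u :=
  letI : Semigroup (Y → Y) := { mul := fun u v ↦ u ∘ v, mul_assoc := fun _ _ _ ↦ rfl }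
  exists_idempotent_in_compact_subsemigroup
    (fun v ↦ continuous_pi fun y ↦ continuous_apply (v y)) S hne hS hcomp

end OrbitClosure

section Distal

variable {M Y : Type*} [AddMonoid M] [AddAction M Y]

/-- An action is distal if the orbit closure of a pair of distinct points never meets the
diagonal. On compact metric spaces this says that `g ↦ dist (g +ᵥ x) (g +ᵥ y)` is bounded away
from zero whenever `x ≠ y`. -/
class IsDistalAction (M Y : Type*) [AddMonoid M] [AddAction M Y] [TopologicalSpace Y] :
    Prop where
  eq_of_mem_closure_orbit {x y z : Y} : (z, z) ∈ closure (orbit M (x, y)) → x = y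

theorem isDistalAction_of_iInf_dist_pos {Y : Type*} [AddAction M Y] [PseudoMetricSpace Y]
    (h : ∀ x y : Y, x ≠ y → 0 < ⨅ g : M, dist (g +ᵥ x) (g +ᵥ y)) : IsDistalAction M Y where
  eq_of_mem_closure_orbit {x y z} hz := by
    by_contra hxy
    set c := ⨅ g : M, dist (g +ᵥ x) (g +ᵥ y)
    have hclosed : IsClosed {p : Y × Y | c ≤ dist p.1 p.2} :=
      isClosed_le continuous_const continuous_dist
    have horbit : orbit M (x, y) ⊆ {p : Y × Y | c ≤ dist p.1 p.2} := by
      rintro _ ⟨g, rfl⟩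
      exact ciInf_le ⟨0, forall_mem_range.2 fun _ ↦ dist_nonneg⟩ g
    have hcz : c ≤ dist z z := closure_minimal horbit hclosed hz
    exact (h x y hxy).not_ge (hcz.trans_eq (dist_self z))

variable [TopologicalSpace Y] [IsDistalAction M Y]

theorem eq_id_of_comp_self_eq {u : Y → Y} (hu : u ∈ envelopingSemigroup M Y)
    (huu : u ∘ u = u) : u = id := by
  ext y
  have hpair : (u (u y), u y) ∈ closure (orbit M (u y, y)) :=
    map_mem_closure_orbit (f := fun w : Y → Y ↦ (w (u y), w y))
      ((continuous_apply _).prodMk (continuous_apply _)) (fun g ↦ ⟨g, rfl⟩) hu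
  rw [show u (u y) = u y from congrFun huu y] at hpair
  exact IsDistalAction.eq_of_mem_closure_orbit hpair

variable [ContinuousConstVAdd M Y] [CompactSpace Y] [T2Space Y]

theorem mem_closure_orbit_symm {y z : Y} (hz : z ∈ closure (orbit M y)) :
    y ∈ closure (orbit M z) := by
  let S : Set (Y → Y) := {u ∈ envelopingSemigroup M Y | u y ∈ closure (orbit M z)}
  have hne : S.Nonempty := by
    obtain ⟨u, hu, rfl⟩ := exists_mem_envelopingSemigroup_apply_eq hz
    exact ⟨u, hu, subset_closure (mem_orbit_self _)⟩
  have hcompact : IsCompact S :=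
    (isClosed_closure.inter (isClosed_closure.preimage (continuous_apply y))).isCompact
  have hcomp : ∀ u ∈ S, ∀ v ∈ S, u ∘ v ∈ S := fun u hu v hv ↦
    ⟨comp_mem_envelopingSemigroup hu.1 hv.1,
      mem_closure_orbit_trans hv.2 (apply_mem_closure_orbit hu.1 (v y))⟩
  obtain ⟨u, ⟨hu, huy⟩, huu⟩ := exists_comp_self_eq_of_isCompact hne hcompact hcomp
  rwa [eq_id_of_comp_self_eq hu huu] at huy

variable (M) in
theorem isMinimal_of_dense_orbit {x : Y} (hx : Dense (orbit M x)) : AddAction.IsMinimal M Y where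
  dense_orbit y z := mem_closure_orbit_trans (mem_closure_orbit_symm (hx y)) (hx z)

end Distal

section Pi

variable {ι G X : Type*} [AddGroup G] [AddAction G X] [TopologicalSpace X]

instance continuousConstVAdd_addSubgroup_pi [ContinuousConstVAdd G X] (H : AddSubgroup (ι → G)) :
    ContinuousConstVAdd H (ι → X) where
  continuous_const_vadd h :=
    continuous_pi fun i ↦ (continuous_apply i).const_vadd ((h : ι → G) i)

instance isDistalAction_addSubgroup_pi [IsDistalAction G X] (H : AddSubgroup (ι → G)) :
    IsDistalAction H (ι → X) where
  eq_of_mem_closure_orbit {x y z} hz := by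
    ext i
    have hi : (z i, z i) ∈ closure (orbit G (x i, y i)) :=
      map_mem_closure_orbit (M := H) (y := (x, y)) (z := (z, z))
        (f := fun p : (ι → X) × (ι → X) ↦ (p.1 i, p.2 i)) (by fun_prop)
        (fun h ↦ ⟨(h : ι → G) i, rfl⟩) hz
    exact IsDistalAction.eq_of_mem_closure_orbit hi

variable [ContinuousConstVAdd G X] [IsDistalAction G X] [CompactSpace X] [T2Space X]

/- By distality some net in `H` moves `z` back to the base point `o`; in the limit it moves `z'` to
some `w`. The same net moves the glued configuration to the one with faces `o` and `w`, and the
`true` faces of its elements, repeated twice, move `z'` there as well. -/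
theorem glue_mem_closure_orbit {H : AddSubgroup (ι × Bool → G)}
    (hH : ∀ h ∈ H, (fun i ↦ h (i.1, true)) ∈ H) {o : ι → X} {z z' : ι × Bool → X}
    (hz : z ∈ closure (orbit H (o ∘ Prod.fst))) (hz' : z' ∈ closure (orbit H (o ∘ Prod.fst)))
    (hzz' : ∀ i, z (i, true) = z' (i, false)) :
    (fun i ↦ bif i.2 then z' i else z i) ∈ closure (orbit H (o ∘ Prod.fst)) := by
  obtain ⟨⟨_, w⟩, hw, rfl⟩ := exists_mem_closure_orbit_map_eq (M := H)
    (f := Prod.fst (β := ι × Bool → X)) (y := (z, z')) continuous_fst (fun _ ↦ rfl)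
    (mem_closure_orbit_symm hz)
  let v : ι × Bool → X := fun i ↦ bif i.2 then w i else o i.1
  have hglue : v ∈ closure (orbit H fun i ↦ bif i.2 then z' i else z i) := by
    refine map_mem_closure_orbit (M := H) (N := H) (y := (z, z')) (z := (o ∘ Prod.fst, w))
      (f := fun (p : (ι × Bool → X) × (ι × Bool → X)) i ↦ bif i.2 then p.2 i else p.1 i)
      (continuous_pi ?_) (fun h ↦ ⟨h, ?_⟩) hw
    · rintro ⟨i, _ | _⟩ <;> simp only [cond_true, cond_false] <;> fun_prop
    · ext ⟨i, _ | _⟩ <;> rfl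
  have hv : v ∈ closure (orbit H z') := by
    have hz'_eq : z' = fun i ↦ bif i.2 then z' i else z (i.1, true) := by
      ext ⟨i, _ | _⟩ <;> simp [hzz']
    rw [hz'_eq]
    refine map_mem_closure_orbit (M := H) (N := H) (y := (z, z')) (z := (o ∘ Prod.fst, w))
      (f := fun (p : (ι × Bool → X) × (ι × Bool → X)) i ↦ bif i.2 then p.2 i else p.1 (i.1, true))
      (continuous_pi ?_) (fun h ↦ ⟨⟨_, hH h h.2⟩, ?_⟩) hw
    · rintro ⟨i, _ | _⟩ <;> simp only [cond_true, cond_false] <;> fun_prop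
    · ext ⟨i, _ | _⟩ <;> rfl
  exact mem_closure_orbit_trans (mem_closure_orbit_trans hz' hv) (mem_closure_orbit_symm hglue)

end Pi

section Cube

/-- Vertices `((i, j), k)` of the three-dimensional discrete cube. -/
abbrev CubeVertex : Type :=
  (Bool × Bool) × Bool

/-- The point of `X⁸` whose bottom face (`k = false`) is `a b c d` and whose top face
(`k = true`) is `e f g h`; within a face, the index `i` varies fastest. -/
def cube {X : Type*} (a b c d e f g h : X) : CubeVertex → X
  | ((false, false), false) => a
  | ((true, false), false) => b
  | ((false, true), false) => c
  | ((true, true), false) => d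
  | ((false, false), true) => e
  | ((true, false), true) => f
  | ((false, true), true) => g
  | ((true, true), true) => h

@[fun_prop]
theorem continuous_cube {X Y : Type*} [TopologicalSpace X] [TopologicalSpace Y]
    {a b c d e f g h : Y → X} (ha : Continuous a) (hb : Continuous b) (hc : Continuous c)
    (hd : Continuous d) (he : Continuous e) (hf : Continuous f) (hg : Continuous g)
    (hh : Continuous h) :
    Continuous fun y ↦ cube (a y) (b y) (c y) (d y) (e y) (f y) (g y) (h y) :=
  continuous_pi fun
    | ((false, false), false) => ha
    | ((true, false), false) => hb
    | ((false, true), false) => hc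
    | ((true, true), false) => hd
    | ((false, false), true) => he
    | ((true, false), true) => hf
    | ((false, true), true) => hg
    | ((true, true), true) => hh

section Parallelepiped

variable (G X : Type*) [AddCommGroup G]

/-- The element of `G⁸` with entry `t` at the origin and increments `m`, `n`, `p` along the three
edges at the origin. -/
@[simps]
def cubeHom : G × G × G × G →+ CubeVertex → G where
  toFun q v := q.1 + (bif v.1.1 then q.2.1 else 0) + (bif v.1.2 then q.2.2.1 else 0) +
    (bif v.2 then q.2.2.2 else 0)
  map_zero' := by
    ext ⟨⟨i, j⟩, k⟩
    cases i <;> cases j <;> cases k <;> simp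
  map_add' q r := by
    ext ⟨⟨i, j⟩, k⟩
    cases i <;> cases j <;> cases k <;>
      simp only [Prod.fst_add, Prod.snd_add, Pi.add_apply, cond_true, cond_false] <;> abel

/-- The Host–Kra cube group of `G` in dimension three, acting coordinatewise on `X⁸`. -/
abbrev cubeGroup : AddSubgroup (CubeVertex → G) :=
  (cubeHom G).range

variable {G X} [AddAction G X]

/-- The parallelepiped spanned at `x` by `m`, `n` and `p`. -/
def spannedCube (x : X) (m n p : G) : CubeVertex → X :=
  cube x (m +ᵥ x) (n +ᵥ x) ((m + n) +ᵥ x)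
    (p +ᵥ x) ((m + p) +ᵥ x) ((n + p) +ᵥ x) ((m + n + p) +ᵥ x)

theorem cubeHom_vadd_const (x : X) (t m n p : G) :
    cubeHom G (t, m, n, p) +ᵥ const CubeVertex x = spannedCube (t +ᵥ x) m n p := by
  ext ⟨⟨i, j⟩, k⟩
  cases i <;> cases j <;> cases k <;>
    simp [spannedCube, cube, vadd_vadd, add_comm, add_left_comm]

theorem orbit_cubeGroup_const (x : X) :
    orbit (cubeGroup G) (const CubeVertex x) =
      {z | ∃ t m n p : G, spannedCube (t +ᵥ x) m n p = z} := by
  ext z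
  constructor
  · rintro ⟨⟨_, ⟨t, m, n, p⟩, rfl⟩, rfl⟩
    exact ⟨t, m, n, p, (cubeHom_vadd_const x t m n p).symm⟩
  · rintro ⟨t, m, n, p, rfl⟩
    exact ⟨⟨_, (t, m, n, p), rfl⟩, cubeHom_vadd_const x t m n p⟩

variable (G X) [TopologicalSpace X]

/-- The set `𝒬` of three-dimensional dynamical cubes: the closure in `X⁸` of the set of
parallelepipeds. -/
def cubes : Set (CubeVertex → X) :=
  closure {z | ∃ (x : X) (m n p : G), spannedCube x m n p = z}

theorem isClosed_cubes : IsClosed (cubes G X) :=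
  isClosed_closure

variable {G X}

theorem spannedCube_mem_cubes (x : X) (m n p : G) : spannedCube x m n p ∈ cubes G X :=
  subset_closure ⟨x, m, n, p, rfl⟩

variable {a b c d e f g h : X}

theorem comp_mem_cubes {σ : CubeVertex → CubeVertex} {z : CubeVertex → X}
    (hσ : ∀ (x : X) (m n p : G), spannedCube x m n p ∘ σ ∈ cubes G X) (hz : z ∈ cubes G X) :
    z ∘ σ ∈ cubes G X := by
  refine closure_minimal ?_ ((isClosed_cubes G X).preimage
    (continuous_pi fun v ↦ continuous_apply (σ v))) hz
  rintro _ ⟨x, m, n, p, rfl⟩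
  exact hσ x m n p

theorem reflect_mem_cubes (hz : cube a b c d e f g h ∈ cubes G X) :
    cube e f g h a b c d ∈ cubes G X := by
  convert comp_mem_cubes (σ := fun v ↦ (v.1, !v.2)) (fun x m n p ↦ ?_) hz using 1
  · ext ⟨⟨i, j⟩, k⟩
    cases i <;> cases j <;> cases k <;> rfl
  · convert spannedCube_mem_cubes (p +ᵥ x) m n (-p) using 1
    ext ⟨⟨i, j⟩, k⟩
    cases i <;> cases j <;> cases k <;> simp [spannedCube, cube, vadd_vadd]

theorem swap₁₃_mem_cubes (hz : cube a b c d e f g h ∈ cubes G X) :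
    cube a e c g b f d h ∈ cubes G X := by
  convert comp_mem_cubes (σ := fun v ↦ ((v.2, v.1.2), v.1.1)) (fun x m n p ↦ ?_) hz using 1
  · ext ⟨⟨i, j⟩, k⟩
    cases i <;> cases j <;> cases k <;> rfl
  · convert spannedCube_mem_cubes x p n m using 1
    ext ⟨⟨i, j⟩, k⟩
    cases i <;> cases j <;> cases k <;>
      simp only [comp_apply, spannedCube, cube, add_comm, add_left_comm]

theorem swap₂₃_mem_cubes (hz : cube a b c d e f g h ∈ cubes G X) :
    cube a b e f c d g h ∈ cubes G X := by
  convert comp_mem_cubes (σ := fun v ↦ ((v.1.1, v.2), v.1.2)) (fun x m n p ↦ ?_) hz using 1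
  · ext ⟨⟨i, j⟩, k⟩
    cases i <;> cases j <;> cases k <;> rfl
  · convert spannedCube_mem_cubes x m p n using 1
    ext ⟨⟨i, j⟩, k⟩
    cases i <;> cases j <;> cases k <;>
      simp only [comp_apply, spannedCube, cube, add_comm, add_left_comm]

theorem duplicate_mem_cubes (hz : cube a b c d e f g h ∈ cubes G X) :
    cube a b c d a b c d ∈ cubes G X := by
  convert comp_mem_cubes (σ := fun v ↦ (v.1, false)) (fun x m n p ↦ ?_) hz using 1
  · ext ⟨⟨i, j⟩, k⟩
    cases i <;> cases j <;> cases k <;> rfl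
  · convert spannedCube_mem_cubes x m n (0 : G) using 1
    ext ⟨⟨i, j⟩, k⟩
    cases i <;> cases j <;> cases k <;> simp [spannedCube, cube]

variable [AddAction.IsMinimal G X]

theorem cubes_eq_closure_orbit [ContinuousConstVAdd G X] (x : X) :
    cubes G X = closure (orbit (cubeGroup G) (const CubeVertex x)) := by
  have hconst (y : X) : const CubeVertex y ∈ closure (orbit (cubeGroup G) (const CubeVertex x)) :=
    map_mem_closure_orbit (f := const CubeVertex) (continuous_pi fun _ ↦ continuous_id)
      (fun t ↦ ⟨⟨_, (t, 0, 0, 0), rfl⟩, by ext; simp [cubeHom]⟩) (dense_orbit G x y)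
  apply Subset.antisymm
  · refine closure_minimal ?_ isClosed_closure
    rintro _ ⟨y, m, n, p, rfl⟩
    refine mem_closure_orbit_trans (hconst y) (subset_closure ?_)
    rw [orbit_cubeGroup_const]
    exact ⟨0, m, n, p, by rw [zero_vadd]⟩
  · rw [orbit_cubeGroup_const]
    refine closure_mono ?_
    rintro _ ⟨t, m, n, p, rfl⟩
    exact ⟨t +ᵥ x, m, n, p, rfl⟩

theorem prism_mem_cubes [ContinuousConstVAdd G X] (x y : X) (m n : G) :
    cube x (m +ᵥ x) (n +ᵥ x) ((m + n) +ᵥ x) y (m +ᵥ y) (n +ᵥ y) ((m + n) +ᵥ y) ∈ cubes G X := by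
  refine map_mem_closure
    (f := fun y ↦ cube x (m +ᵥ x) (n +ᵥ x) ((m + n) +ᵥ x) y (m +ᵥ y) (n +ᵥ y) ((m + n) +ᵥ y))
    (by fun_prop) (dense_orbit G x y) ?_
  rintro _ ⟨p, rfl⟩
  exact ⟨x, m, n, p, by simp only [spannedCube, vadd_vadd]⟩

variable [ContinuousConstVAdd G X] [IsDistalAction G X] [CompactSpace X] [T2Space X]

theorem glue_mem_cubes {a' b' c' d' : X} (hz : cube a b c d e f g h ∈ cubes G X)
    (hz' : cube e f g h a' b' c' d' ∈ cubes G X) : cube a b c d a' b' c' d' ∈ cubes G X := by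
  rw [cubes_eq_closure_orbit a] at hz hz' ⊢
  have hface_true : ∀ h ∈ cubeGroup G, (fun v : CubeVertex ↦ h (v.1, true)) ∈ cubeGroup G := by
    rintro _ ⟨⟨t, m, n, p⟩, rfl⟩
    refine ⟨(t + p, m, n, 0), ?_⟩
    ext ⟨⟨i, j⟩, k⟩
    cases i <;> cases j <;> cases k <;> 
      simp only [cubeHom_apply, cond_true, cond_false] <;> abel
  have hglued (i : Bool × Bool) :
      cube a b c d e f g h (i, true) = cube e f g h a' b' c' d' (i, false) := by
    rcases i with ⟨_ | _, _ | _⟩ <;> rfl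
  have hglue : (fun v ↦ bif v.2 then cube e f g h a' b' c' d' v else cube a b c d e f g h v) ∈
      closure (orbit (cubeGroup G) (const CubeVertex a)) :=
    glue_mem_closure_orbit (o := const _ a) hface_true hz hz' hglued
  convert hglue using 1
  ext ⟨⟨i, j⟩, k⟩
  cases i <;> cases j <;> cases k <;> rfl

theorem collapse_mem_cubes {x y : X} (hz : cube x a b c y a b c ∈ cubes G X) :
    cube x y y y y y y y ∈ cubes G X := by
  have hxy : cube x y b b a a c c ∈ cubes G X := swap₁₃_mem_cubes hz
  have hy : cube y a b c y a b c ∈ cubes G X := duplicate_mem_cubes (reflect_mem_cubes hz)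
  have hy' : cube a a c c y y b b ∈ cubes G X := reflect_mem_cubes (swap₁₃_mem_cubes hy)
  have hxyb : cube x y b b y y b b ∈ cubes G X := glue_mem_cubes hxy hy'
  have hedge : cube b b b b y y y y ∈ cubes G X := by
    simpa only [zero_vadd, add_zero] using prism_mem_cubes b y (0 : G) 0
  exact glue_mem_cubes (swap₂₃_mem_cubes hxyb) hedge

end Parallelepiped

end Cube

section Uniform

variable {ι X : Type*} [Finite ι] [UniformSpace X]

theorem exists_mem_uniformity_of_mem_uniformity_pi {V : Set ((ι → X) × (ι → X))}
    (hV : V ∈ 𝓤 (ι → X)) : ∃ U ∈ 𝓤 X, ∀ z w : ι → X, (∀ i, (z i, w i) ∈ U) → (z, w) ∈ V := by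
  rw [Pi.uniformity] at hV
  obtain ⟨_, -, W, hW, -, -, rfl⟩ := mem_iInf'.1 hV
  choose U hU hUW using hW
  exact ⟨⋂ i, U i, iInter_mem.2 hU, fun z w hzw ↦
    mem_iInter.2 fun i ↦ hUW i (mem_iInter.1 (hzw i) i)⟩

theorem exists_apply_eq_of_forall_mem_uniformity [CompactSpace X] [T2Space X] {K : Set (ι → X)}
    (hK : IsClosed K) {F : (ι → X) → ι → X} (hF : Continuous F)
    (h : ∀ U ∈ 𝓤 X, ∃ z ∈ K, ∀ i, (z i, F z i) ∈ U) : ∃ z ∈ K, F z = z := by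
  by_contra! hne
  have hgraph : IsClosed ((fun z ↦ (z, F z)) '' K) :=
    (hK.isCompact.image (continuous_id.prodMk hF)).isClosed
  have hdisjoint : diagonal (ι → X) ⊆ ((fun z ↦ (z, F z)) '' K)ᶜ := by
    rintro ⟨z, w⟩ (rfl : z = w) ⟨z', hz', heq⟩
    obtain ⟨rfl, hFz⟩ := Prod.mk.inj heq
    exact hne z' hz' hFz
  have huniformity : ((fun z ↦ (z, F z)) '' K)ᶜ ∈ 𝓤 (ι → X) := by
    rw [← nhdsSet_diagonal_eq_uniformity]
    exact hgraph.isOpen_compl.mem_nhdsSet.2 hdisjoint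
  obtain ⟨U, hU, hUK⟩ := exists_mem_uniformity_of_mem_uniformity_pi huniformity
  obtain ⟨z, hz, hzF⟩ := h U hU
  exact hUK z (F z) hzF (mem_image_of_mem _ hz)

end Uniform

section RegionallyProximal

variable (G : Type*) {X : Type*} [AddCommGroup G] [AddAction G X] [UniformSpace X]

/-- The relation `RP²` of an action of an abelian group on a uniform space, with entourages in
place of `ε`. -/
def DoublyRegionallyProximal (x y : X) : Prop :=
  ∀ U ∈ 𝓤 X, ∃ x' y' : X, ∃ m n : G, (x', x) ∈ U ∧ (y', y) ∈ U ∧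
    (m +ᵥ x', m +ᵥ y') ∈ U ∧ (n +ᵥ x', n +ᵥ y') ∈ U ∧ ((m + n) +ᵥ x', (m + n) +ᵥ y') ∈ U

/-- The relation `RP²ₛ` of an action of an abelian group on a uniform space, with entourages in
place of `ε`. -/
def StronglyDoublyRegionallyProximal (x y : X) : Prop :=
  ∀ U ∈ 𝓤 X, ∃ x' y' : X, ∃ m n : G, (x', x) ∈ U ∧ (y', y) ∈ U ∧
    (m +ᵥ x', y) ∈ U ∧ (n +ᵥ x', y) ∈ U ∧ ((m + n) +ᵥ x', y) ∈ U ∧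
    (m +ᵥ y', y) ∈ U ∧ (n +ᵥ y', y) ∈ U ∧ ((m + n) +ᵥ y', y) ∈ U

variable {G} {x y z : X}

theorem StronglyDoublyRegionallyProximal.doublyRegionallyProximal
    (h : StronglyDoublyRegionallyProximal G x y) : DoublyRegionallyProximal G x y := by
  intro U hU
  obtain ⟨V, hV, hVsymm, hVU⟩ := comp_symm_mem_uniformity_sets hU
  obtain ⟨x', y', m, n, hx, hy, hmx, hnx, hmnx, hmy, hny, hmny⟩ := h V hV
  have hVV {a b : X} (ha : (a, y) ∈ V) (hb : (b, y) ∈ V) : (a, b) ∈ U :=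
    hVU ⟨y, ha, hVsymm.symm _ _ hb⟩
  have hV_le : V ⊆ U := (subset_comp_self_of_mem_uniformity hV).trans hVU
  exact ⟨x', y', m, n, hV_le hx, hV_le hy, hVV hmx hmy, hVV hnx hny, hVV hmnx hmny⟩

theorem stronglyDoublyRegionallyProximal_of_mem_cubes
    (h : cube x y y y y y y y ∈ cubes G X) : StronglyDoublyRegionallyProximal G x y := by
  intro U hU
  have hnhds : {w | ∀ v, (w v, cube x y y y y y y y v) ∈ U} ∈ 𝓝 (cube x y y y y y y y) := by
    simpa [Set.pi] using set_pi_mem_nhds (finite_univ (α := CubeVertex))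
      fun v _ ↦ mem_nhds_right (cube x y y y y y y y v) hU
  obtain ⟨_, hw, x', m, n, p, rfl⟩ := mem_closure_iff_nhds.1 h _ hnhds
  have hw (i j k : Bool) := hw ((i, j), k)
  refine ⟨x', p +ᵥ x', m, n, hw false false false, hw false false true, hw true false false,
    hw false true false, hw true true false, ?_⟩
  simp only [vadd_vadd]
  exact ⟨hw true false true, hw false true true, hw true true true⟩

theorem DoublyRegionallyProximal.exists_cube_mem_cubes [CompactSpace X] [T2Space X]
    [AddAction.IsMinimal G X] [ContinuousConstVAdd G X] (h : DoublyRegionallyProximal G x y) :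
    ∃ a b c : X, cube x a b c y a b c ∈ cubes G X := by
  let F (z : CubeVertex → X) : CubeVertex → X :=
    cube x (z ((true, false), true)) (z ((false, true), true)) (z ((true, true), true))
      y (z ((true, false), true)) (z ((false, true), true)) (z ((true, true), true))
  have hF : Continuous F := by fun_prop
  have happrox : ∀ U ∈ 𝓤 X, ∃ z ∈ cubes G X, ∀ v, (z v, F z v) ∈ U := by
    intro U hU
    obtain ⟨x', y', m, n, hx, hy, hm, hn, hmn⟩ := h U hU
    refine ⟨_, prism_mem_cubes x' y' m n, ?_⟩
    rintro ⟨⟨_ | _, _ | _⟩, _ | _⟩ <;> first | assumption | exact refl_mem_uniformity hU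
  obtain ⟨z, hz, hFz⟩ :=
    exists_apply_eq_of_forall_mem_uniformity (isClosed_cubes G X) hF happrox
  exact ⟨_, _, _, hFz.symm ▸ hz⟩

theorem DoublyRegionallyProximal.refl (x : X) : DoublyRegionallyProximal G x x :=
  fun _ hU ↦ ⟨x, x, 0, 0, by simp only [refl_mem_uniformity hU, and_self]⟩

variable [CompactSpace X] [T2Space X] [ContinuousConstVAdd G X] [IsDistalAction G X]
  [AddAction.IsMinimal G X]

theorem doublyRegionallyProximal_iff_cube_mem_cubes :
    DoublyRegionallyProximal G x y ↔ cube x y y y y y y y ∈ cubes G X := by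
  refine ⟨fun h ↦ ?_, fun h ↦
    (stronglyDoublyRegionallyProximal_of_mem_cubes h).doublyRegionallyProximal⟩
  obtain ⟨a, b, c, habc⟩ := h.exists_cube_mem_cubes
  exact collapse_mem_cubes habc

theorem isClosed_doublyRegionallyProximal :
    IsClosed {p : X × X | DoublyRegionallyProximal G p.1 p.2} := by
  simp only [doublyRegionallyProximal_iff_cube_mem_cubes]
  exact (isClosed_cubes G X).preimage (f := fun p : X × X ↦
    cube p.1 p.2 p.2 p.2 p.2 p.2 p.2 p.2) (by fun_prop)

theorem DoublyRegionallyProximal.symm (h : DoublyRegionallyProximal G x y) :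
    DoublyRegionallyProximal G y x := by
  obtain ⟨a, b, c, habc⟩ := h.exists_cube_mem_cubes
  rw [doublyRegionallyProximal_iff_cube_mem_cubes]
  exact collapse_mem_cubes (reflect_mem_cubes habc)

theorem DoublyRegionallyProximal.trans (hxy : DoublyRegionallyProximal G x y)
    (hyz : DoublyRegionallyProximal G y z) : DoublyRegionallyProximal G x z := by
  have hzy := hyz.symm
  rw [doublyRegionallyProximal_iff_cube_mem_cubes] at hxy hzy ⊢
  exact collapse_mem_cubes (glue_mem_cubes hxy (reflect_mem_cubes hzy))

end RegionallyProximal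

theorem stmt1_general {G X : Type*} [AddCommGroup G] [UniformSpace X] [CompactSpace X] [T2Space X]
    [AddAction G X] [ContinuousConstVAdd G X] [IsDistalAction G X]
    (htrans : ∃ x : X, Dense (orbit G x)) :
    IsClosed {p : X × X | DoublyRegionallyProximal G p.1 p.2} ∧
      Equivalence (DoublyRegionallyProximal G (X := X)) ∧
      ∀ x y : X, DoublyRegionallyProximal G x y ↔ StronglyDoublyRegionallyProximal G x y := by
  obtain ⟨x₀, hx₀⟩ := htrans
  have := isMinimal_of_dense_orbit G hx₀
  exact ⟨isClosed_doublyRegionallyProximal, ⟨.refl, .symm, .trans⟩, fun x y ↦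
    ⟨fun h ↦ stronglyDoublyRegionallyProximal_of_mem_cubes <|
      doublyRegionallyProximal_iff_cube_mem_cubes.1 h,
    StronglyDoublyRegionallyProximal.doublyRegionallyProximal⟩⟩

section Iterates

theorem continuous_iterZ {X : Type*} [TopologicalSpace X] (T : X ≃ₜ X) (n : ℤ) :
    Continuous (iterZ T n) := by
  let toPerm : (X ≃ₜ X) →* Equiv.Perm X := ⟨⟨Homeomorph.toEquiv, rfl⟩, fun _ _ ↦ rfl⟩
  have hpow : (T ^ n).toEquiv = T.toEquiv ^ n := map_zpow toPerm T n
  have hiter : iterZ T n = ⇑(T ^ n) := congrArg DFunLike.coe hpow.symm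
  exact hiter ▸ (T ^ n).continuous

/-- The action of `ℤ` generated by a homeomorphism, given by its iterates. -/
abbrev iterZAction {X : Type*} [TopologicalSpace X] (T : X ≃ₜ X) : AddAction ℤ X where
  vadd := iterZ T
  zero_vadd x := by
    change iterZ T 0 x = x
    simp [iterZ]
  add_vadd m n x := by
    change iterZ T (m + n) x = iterZ T m (iterZ T n x)
    simp [iterZ, zpow_add]

variable {X : Type*} [MetricSpace X] (T : X ≃ₜ X) (x y : X)

theorem doublyRegionallyProximal_iterZAction_iff :
    letI := iterZAction T
    DoublyRegionallyProximal ℤ x y ↔ RP2 T x y :=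
  Metric.uniformity_basis_dist.forall_iff fun U V hUV ↦ by
    rintro ⟨x', y', m, n, hx, hy, hm, hn, hmn⟩
    exact ⟨x', y', m, n, hUV hx, hUV hy, hUV hm, hUV hn, hUV hmn⟩

theorem stronglyDoublyRegionallyProximal_iterZAction_iff :
    letI := iterZAction T
    StronglyDoublyRegionallyProximal ℤ x y ↔ RP2S T x y :=
  Metric.uniformity_basis_dist.forall_iff fun U V hUV ↦ by
    rintro ⟨x', y', m, n, hx, hy, hmx, hnx, hmnx, hmy, hny, hmny⟩
    exact ⟨x', y', m, n, hUV hx, hUV hy, hUV hmx, hUV hnx, hUV hmnx, hUV hmy, hUV hny, hUV hmny⟩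

end Iterates

/-- For a distal transitive system, `RP²` is a closed equivalence relation and
coincides with `RP²ₛ`. -/
theorem stmt1 {X : Type*} [MetricSpace X] [CompactSpace X] [Nonempty X]
    (T : X ≃ₜ X) (hdistal : IsDistal T) (htrans : IsTransitive T) :
    IsClosed {p : X × X | RP2 T p.1 p.2} ∧ Equivalence (RP2 T) ∧
      (∀ x y : X, RP2 T x y ↔ RP2S T x y) := by
  let := iterZAction T
  have : ContinuousConstVAdd ℤ X := ⟨continuous_iterZ T⟩
  have : IsDistalAction ℤ X := isDistalAction_of_iInf_dist_pos hdistal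
  have hRP2 : DoublyRegionallyProximal ℤ = RP2 T := by
    ext x y
    exact doublyRegionallyProximal_iterZAction_iff T x y
  simpa only [hRP2, stronglyDoublyRegionallyProximal_iterZAction_iff T] using
    stmt1_general (G := ℤ) htrans
end

section
/- Let (X,T) be a minimal topological dynamical system and suppose (x,y) ∈ RP. Then for every ε > 0 and every finite family z_1,…,z_k of points of X there exist z'_1,…,z'_k ∈ X and n ∈ ℤ such that d(T^n y, x) < ε and, for every i ∈ {1,…,k}, d(z'_i, z_i) < ε and d(T^n z'_i, z_i) < ε. -/
open Filter Topology

/-!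
The theorem is deduced from McMahon's lemma. Let `N ⊆ X × Y` be closed and invariant, where `X` is
minimal and `Y` carries an invariant finite measure `ν`, and write `N_a = {w | (a, w) ∈ N}`. The
function `a ↦ ν (N_a)` is upper semicontinuous and invariant, hence constant; this upgrades the
upper semicontinuity of `a ↦ N_a` to continuity for the distance `ν (s ∆ t)`. That distance is
invariant and, by compactness of `X`, `a ↦ N_a` is uniformly continuous, so it cannot separate
regionally proximal points: `N_x = N_y` up to a null set.

Now let `ν` have full support, let `W ⊆ Y` be open and nonempty, and let `N` be the closure of the
union of the translates of `{y} × W`. Then `W ⊆ N_y`, so `W` meets `N_x`, and the definition of `N`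
yields `g` with `g • y` close to `x` and `g • w ∈ W` for some `w ∈ W`. For the theorem, `Y = X ^ k`
with the `k`-th power of an invariant measure given by the Krylov–Bogoliubov theorem, and `W` is the
product of the `ε`-balls around the `z i`.
-/

open MeasureTheory
open scoped ENNReal Pointwise Uniformity symmDiff

/-! ### Regional proximality and minimality for group actions -/

/-- The regionally proximal relation of an action of `G` on a uniform space. For the iterates of a
homeomorphism of a metric space this is `RP`. -/
def RegionallyProximal (G : Type*) {X : Type*} [UniformSpace X] [SMul G X] (x y : X) : Prop :=
  ∀ V ∈ 𝓤 X, ∃ x' y' : X, ∃ g : G, (x', x) ∈ V ∧ (y', y) ∈ V ∧ (g • x', g • y') ∈ V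

theorem RegionallyProximal.inseparable_map {G X E : Type*} [UniformSpace X] [CompactSpace X]
    [SMul G X] [PseudoEMetricSpace E] {x y : X} (hxy : RegionallyProximal G x y) {f : X → E}
    (hf : Continuous f)
    (hiso : ∀ (g : G) (a b : X), edist (f (g • a)) (f (g • b)) = edist (f a) (f b)) :
    Inseparable (f x) (f y) := by
  have hunif : UniformContinuous f := CompactSpace.uniformContinuous_of_continuous hf
  refine EMetric.inseparable_iff.2 <|
    le_antisymm (ENNReal.le_of_forall_pos_le_add fun δ hδ _ ↦ ?_) bot_le
  have hδ3 : (δ : ℝ≥0∞) / 3 ≠ 0 := by simpa using hδ.ne'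
  obtain ⟨x', y', g, hx, hy, hg⟩ := hxy _ (hunif (edist_mem_uniformity hδ3.bot_lt))
  simp only [Set.mem_preimage, Set.mem_ofPred_eq, hiso] at hx hy hg
  calc edist (f x) (f y)
      ≤ edist (f x) (f x') + edist (f x') (f y') + edist (f y') (f y) := edist_triangle4 ..
    _ ≤ δ / 3 + δ / 3 + δ / 3 := by rw [edist_comm (f x)]; gcongr
    _ = 0 + δ := by rw [ENNReal.add_thirds, zero_add]

theorem eq_of_upperSemicontinuous_of_smul_invariant {M X β : Type*} [Monoid M]
    [TopologicalSpace X] [MulAction M X] [MulAction.IsMinimal M X] [LinearOrder β] {f : X → β}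
    (hf : UpperSemicontinuous f) (hinv : ∀ (c : M) (a : X), f (c • a) = f a) (a b : X) :
    f a = f b := by
  have hle : ∀ a b, f b ≤ f a := by
    intro a b
    by_contra! hlt
    obtain ⟨c, hc⟩ := (hf.isOpen_preimage (f b)).exists_smul_mem M b ⟨a, hlt⟩
    exact (hinv c b).not_lt hc
  exact le_antisymm (hle b a) (hle a b)

/-! ### Sections of closed sets -/

section Sections

variable {X Y : Type*} [TopologicalSpace X] [TopologicalSpace Y] {N : Set (X × Y)}

theorem eventually_preimage_prodMk_subset [CompactSpace Y] (hN : IsClosed N) {a : X} {O : Set Y}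
    (hO : IsOpen O) (haO : Prod.mk a ⁻¹' N ⊆ O) : ∀ᶠ b in 𝓝 a, Prod.mk b ⁻¹' N ⊆ O := by
  refine isCompact_univ.eventually_forall_of_forall_eventually
    (P := fun b w ↦ (b, w) ∈ N → w ∈ O) (fun w _ ↦ ?_) |>.mono fun b hb w ↦ hb w trivial
  by_cases hw : (a, w) ∈ N
  · filter_upwards [(hO.preimage continuous_snd).mem_nhds (haO hw)] with p hp _ using hp
  · filter_upwards [hN.isOpen_compl.mem_nhds hw] with p hp hpN using absurd hpN hp

variable [MeasurableSpace Y]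

theorem upperSemicontinuous_measure_preimage_prodMk [CompactSpace Y] {ν : Measure Y}
    [ν.OuterRegular] (hN : IsClosed N) : UpperSemicontinuous fun a ↦ ν (Prod.mk a ⁻¹' N) := by
  intro a c hc
  obtain ⟨O, haO, hO, hνO⟩ := Set.exists_isOpen_lt_of_lt _ c hc
  filter_upwards [eventually_preimage_prodMk_subset hN hO haO] with b hb
  exact (measure_mono hb).trans_lt hνO

variable [OpensMeasurableSpace Y]

/-- The section `{w | (a, w) ∈ N}` of a closed set `N ⊆ X × Y`, as a point of the space of
measurable subsets of `Y` with the distance `ν (s ∆ t)`. -/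
def closedSection (ν : Measure Y) (hN : IsClosed N) (a : X) : MeasuredSets ν :=
  ⟨Prod.mk a ⁻¹' N, (hN.preimage (by fun_prop)).measurableSet⟩

theorem continuous_closedSection [CompactSpace Y] {ν : Measure Y} [IsFiniteMeasure ν]
    [ν.OuterRegular] (hN : IsClosed N)
    (hconst : ∀ a b, ν (Prod.mk a ⁻¹' N) = ν (Prod.mk b ⁻¹' N)) :
    Continuous (closedSection ν hN) := by
  have hmeas (a : X) : NullMeasurableSet (Prod.mk a ⁻¹' N) ν :=
    (closedSection ν hN a).2.nullMeasurableSet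
  refine continuous_iff_continuousAt.2 fun a ↦ EMetric.tendsto_nhds.2 fun ε hε ↦ ?_
  obtain ⟨O, haO, hO, hνO⟩ :
      ∃ O ⊇ Prod.mk a ⁻¹' N, IsOpen O ∧ ν O < ν (Prod.mk a ⁻¹' N) + ε / 2 :=
    Set.exists_isOpen_lt_add _ (measure_ne_top ν _) (ENNReal.half_pos hε.ne').ne'
  filter_upwards [eventually_preimage_prodMk_subset hN hO haO] with b hb
  have hdiff : ν (Prod.mk b ⁻¹' N \ Prod.mk a ⁻¹' N) < ε / 2 :=
    (measure_mono (Set.sdiff_subset_sdiff_left hb)).trans_lt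
      (measure_sdiff_lt_of_lt_add (hmeas a) haO (measure_ne_top ν _) hνO)
  have hsymm : ν (Prod.mk a ⁻¹' N \ Prod.mk b ⁻¹' N) = ν (Prod.mk b ⁻¹' N \ Prod.mk a ⁻¹' N) :=
    measure_sdiff_symm (hmeas a) (hmeas b) (hconst a b) (measure_ne_top ν _)
  calc edist (closedSection ν hN b) (closedSection ν hN a)
      = ν (Prod.mk b ⁻¹' N \ Prod.mk a ⁻¹' N) + ν (Prod.mk a ⁻¹' N \ Prod.mk b ⁻¹' N) :=
        measure_symmDiff_eq (hmeas b) (hmeas a)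
    _ < ε / 2 + ε / 2 := ENNReal.add_lt_add hdiff (hsymm.trans_lt hdiff)
    _ = ε := ENNReal.add_halves ε

end Sections

/-! ### McMahon's lemma -/

theorem preimage_smul_preimage_prodMk_smul {G X Y : Type*} [Group G] [MulAction G X]
    [MulAction G Y] {N : Set (X × Y)} (hinv : ∀ g : G, ∀ p ∈ N, g • p ∈ N) (g : G) (a : X) :
    (g • ·) ⁻¹' (Prod.mk (g • a) ⁻¹' N) = Prod.mk a ⁻¹' N := by
  ext w
  refine ⟨fun hw ↦ ?_, hinv g (a, w)⟩
  simpa using hinv g⁻¹ _ hw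

namespace RegionallyProximal

variable {G X Y : Type*} [Group G] [UniformSpace X] [CompactSpace X] [MulAction G X]
  [MulAction.IsMinimal G X] [TopologicalSpace Y] [CompactSpace Y] [MulAction G Y]
  [MeasurableSpace Y] [OpensMeasurableSpace Y] {x y : X}

theorem preimage_prodMk_ae_eq {ν : Measure Y} [IsFiniteMeasure ν] [ν.OuterRegular]
    [SMulInvariantMeasure G Y ν] (hxy : RegionallyProximal G x y) {N : Set (X × Y)}
    (hN : IsClosed N) (hinv : ∀ g : G, ∀ p ∈ N, g • p ∈ N) :
    Prod.mk x ⁻¹' N =ᵐ[ν] Prod.mk y ⁻¹' N := by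
  have hsec := preimage_smul_preimage_prodMk_smul hinv
  have hconst : ∀ a b, ν (Prod.mk a ⁻¹' N) = ν (Prod.mk b ⁻¹' N) :=
    eq_of_upperSemicontinuous_of_smul_invariant (M := G)
      (upperSemicontinuous_measure_preimage_prodMk hN) fun g a ↦ by
        rw [← hsec g a, measure_preimage_smul]
  have hiso (g : G) (a b : X) :
      edist (closedSection ν hN (g • a)) (closedSection ν hN (g • b)) =
        edist (closedSection ν hN a) (closedSection ν hN b) := by
    change ν ((Prod.mk (g • a) ⁻¹' N) ∆ (Prod.mk (g • b) ⁻¹' N)) =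
      ν ((Prod.mk a ⁻¹' N) ∆ (Prod.mk b ⁻¹' N))
    rw [← hsec g a, ← hsec g b, ← Set.preimage_symmDiff, measure_preimage_smul]
  exact measure_symmDiff_eq_zero_iff.1 <| EMetric.inseparable_iff.1 <|
    hxy.inseparable_map (continuous_closedSection hN hconst) hiso

theorem exists_smul_mem [ContinuousConstSMul G X] [ContinuousConstSMul G Y] (ν : Measure Y)
    [IsFiniteMeasure ν] [ν.OuterRegular] [ν.IsOpenPosMeasure] [SMulInvariantMeasure G Y ν]
    (hxy : RegionallyProximal G x y) {U : Set X} (hU : U ∈ 𝓝 x) {W : Set Y} (hW : IsOpen W)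
    (hne : W.Nonempty) : ∃ g : G, g • y ∈ U ∧ ∃ w ∈ W, g • w ∈ W := by
  set N : Set (X × Y) := closure (⋃ g : G, g • ({y} ×ˢ W))
  have hinv : ∀ g : G, ∀ p ∈ N, g • p ∈ N := fun g p hp ↦ by
    refine map_mem_closure (continuous_const_smul g) hp fun q hq ↦ ?_
    obtain ⟨h, hq⟩ := Set.mem_iUnion.1 hq
    exact Set.mem_iUnion.2 ⟨g * h, by simpa only [mul_smul] using Set.smul_mem_smul_set hq⟩
  have hWy : W ⊆ Prod.mk y ⁻¹' N := fun w hw ↦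
    subset_closure <| Set.mem_iUnion.2 ⟨1, by simpa using hw⟩
  obtain ⟨u, huW, hu⟩ : (W ∩ Prod.mk x ⁻¹' N).Nonempty := by
    refine nonempty_of_measure_ne_zero (μ := ν) ?_
    rw [measure_congr ((ae_eq_refl W).inter (hxy.preimage_prodMk_ae_eq isClosed_closure hinv)),
      Set.inter_eq_left.2 hWy]
    exact (hW.measure_pos ν hne).ne'
  obtain ⟨_, ⟨hgU, hgW⟩, hg⟩ := mem_closure_iff_nhds.1 hu _ (prod_mem_nhds hU (hW.mem_nhds huW))
  obtain ⟨g, ⟨_, w⟩, ⟨rfl, hw⟩, rfl⟩ := Set.mem_iUnion.1 hg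
  exact ⟨g, hgU, w, hw, hgW⟩

end RegionallyProximal

theorem smulInvariantMeasure_pi {G ι X : Type*} [Fintype ι] [SMul G X] [MeasurableSpace X]
    [MeasurableConstSMul G X] (μ : Measure X) [SigmaFinite μ] [SMulInvariantMeasure G X μ] :
    SMulInvariantMeasure G (ι → X) (Measure.pi fun _ ↦ μ) :=
  ⟨fun g _ hs ↦ (measurePreserving_pi (fun _ ↦ μ) (fun _ ↦ μ)
    fun _ ↦ measurePreserving_smul g μ).measure_preimage hs.nullMeasurableSet⟩

theorem stmt5_general {G X ι : Type*} [Group G] [PseudoMetricSpace X] [CompactSpace X]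
    [MulAction G X] [ContinuousConstSMul G X] [MulAction.IsMinimal G X] [MeasurableSpace X]
    [BorelSpace X] (μ : Measure X) [IsFiniteMeasure μ] [NeZero μ] [SMulInvariantMeasure G X μ]
    [Finite ι] {x y : X} (hxy : RegionallyProximal G x y) {ε : ℝ} (hε : 0 < ε) (z : ι → X) :
    ∃ (z' : ι → X) (g : G), dist (g • y) x < ε ∧
      ∀ i, dist (z' i) (z i) < ε ∧ dist (g • z' i) (z i) < ε := by
  have := Fintype.ofFinite ι
  have : μ.IsOpenPosMeasure := ⟨fun _ hU hne ↦
    (measure_isOpen_pos_of_smulInvariant_of_ne_zero G (NeZero.ne μ) hU hne).ne'⟩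
  have := smulInvariantMeasure_pi (G := G) (ι := ι) μ
  obtain ⟨g, hgy, w, hw, hgw⟩ := hxy.exists_smul_mem (Measure.pi fun _ : ι ↦ μ)
    (Metric.ball_mem_nhds x hε) (isOpen_set_pi Set.finite_univ fun _ _ ↦ Metric.isOpen_ball)
    ⟨z, fun _ _ ↦ Metric.mem_ball_self hε⟩
  exact ⟨w, g, hgy, fun i ↦ ⟨hw i trivial, hgw i trivial⟩⟩

/-! ### The Krylov–Bogoliubov theorem -/

section KrylovBogoliubov

variable {X : Type*} [MeasurableSpace X]

/-- The uniform probability measure on the orbit segment `x, f x, …, f^[n] x`, counted with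
multiplicity; its integrals are the Birkhoff averages. The segment has `n + 1` points, so that the
measure is a probability measure for every `n`. -/
noncomputable def empiricalMeasure (f : X → X) (x : X) (n : ℕ) : Measure X :=
  (n + 1 : ℝ≥0∞)⁻¹ • ∑ i ∈ Finset.range (n + 1), Measure.dirac (f^[i] x)

instance isProbabilityMeasure_empiricalMeasure (f : X → X) (x : X) (n : ℕ) :
    IsProbabilityMeasure (empiricalMeasure f x n) := by
  constructor
  simp only [empiricalMeasure, Measure.smul_apply, Measure.finsetSum_apply, measure_univ,
    Finset.sum_const, Finset.card_range, nsmul_eq_mul, mul_one, smul_eq_mul, Nat.cast_add,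
    Nat.cast_one]
  exact ENNReal.inv_mul_cancel (by simp) (by simp)

theorem integral_empiricalMeasure {E : Type*} [NormedAddCommGroup E] [NormedSpace ℝ E]
    [CompleteSpace E] (f : X → X) (x : X) (n : ℕ) {φ : X → E} (hφ : StronglyMeasurable φ) :
    ∫ w, φ w ∂empiricalMeasure f x n = birkhoffAverage ℝ f φ (n + 1) x := by
  rw [empiricalMeasure, integral_smul_measure,
    integral_finsetSum_measure fun i _ ↦ integrable_dirac' hφ (by simp)]
  simp [birkhoffAverage, birkhoffSum, integral_dirac' _ _ hφ, ENNReal.toReal_add]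

variable [TopologicalSpace X]

theorem tendsto_integral_comp_sub_integral_empiricalMeasure [OpensMeasurableSpace X] {f : X → X}
    (hf : Continuous f) (x : X) (φ : BoundedContinuousFunction X ℝ) :
    Tendsto (fun n ↦ ∫ w, φ (f w) ∂empiricalMeasure f x n - ∫ w, φ w ∂empiricalMeasure f x n)
      atTop (𝓝 0) := by
  have hcomp (n : ℕ) :
      ∫ w, φ (f w) ∂empiricalMeasure f x n = birkhoffAverage ℝ f φ (n + 1) (f x) := by
    refine (integral_empiricalMeasure f x n (φ.continuous.comp hf).stronglyMeasurable).trans ?_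
    simp only [birkhoffAverage, birkhoffSum, Function.comp_apply, ← Function.iterate_succ_apply,
      ← Function.iterate_succ_apply']
  simp only [hcomp, integral_empiricalMeasure f x _ φ.continuous.stronglyMeasurable]
  exact (tendsto_birkhoffAverage_apply_sub_birkhoffAverage' ℝ φ.isBounded_range f x).comp
    (tendsto_add_atTop_nat 1)

theorem exists_measurePreserving_of_continuous [CompactSpace X] [T2Space X]
    [HasOuterApproxClosed X] [BorelSpace X] [Nonempty X] {f : X → X} (hf : Continuous f) :
    ∃ μ : ProbabilityMeasure X, MeasurePreserving f (μ : Measure X) μ := by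
  obtain ⟨x⟩ := ‹Nonempty X›
  let p (n : ℕ) : ProbabilityMeasure X := ⟨empiricalMeasure f x n, inferInstance⟩
  obtain ⟨μ, hμ⟩ : ∃ μ, MapClusterPt μ atTop p := exists_clusterPt_of_compactSpace _
  refine ⟨μ, hf.measurable, ?_⟩
  have := Measure.isProbabilityMeasure_map (μ := (μ : Measure X)) hf.aemeasurable
  refine ext_of_forall_integral_eq_of_IsFiniteMeasure fun φ ↦ ?_
  rw [integral_map hf.aemeasurable φ.continuous.aestronglyMeasurable]
  let Φ (ρ : ProbabilityMeasure X) : ℝ :=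
    ∫ w, φ (f w) ∂(ρ : Measure X) - ∫ w, φ w ∂(ρ : Measure X)
  have hΦ : Continuous Φ :=
    (ProbabilityMeasure.continuous_integral_boundedContinuousFunction
      (φ.compContinuous ⟨f, hf⟩)).sub
      (ProbabilityMeasure.continuous_integral_boundedContinuousFunction φ)
  have hcluster : MapClusterPt (Φ μ) atTop (Φ ∘ p) := hμ.continuousAt_comp hΦ.continuousAt
  exact sub_eq_zero.1 <| eq_of_nhds_neBot <|
    hcluster.clusterPt.mono (tendsto_integral_comp_sub_integral_empiricalMeasure hf x φ)

end KrylovBogoliubov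

/-! ### The action of the iterates of a homeomorphism -/

section ZPowers

variable {X : Type*}

theorem continuousConstSMul_zpowers [TopologicalSpace X] (T : X ≃ₜ X) :
    ContinuousConstSMul (Subgroup.zpowers T.toEquiv) X :=
  ⟨Subgroup.forall_zpowers.2 <| zpow_induction_left (P := fun σ : Equiv.Perm X ↦ Continuous σ)
    continuous_id (fun _ hσ ↦ T.continuous.comp hσ) (fun _ hσ ↦ T.symm.continuous.comp hσ)⟩

theorem smulInvariantMeasure_zpowers [TopologicalSpace X] [MeasurableSpace X] [BorelSpace X]
    {T : X ≃ₜ X} {μ : Measure X} (hT : MeasurePreserving T μ μ) :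
    SMulInvariantMeasure (Subgroup.zpowers T.toEquiv) X μ := by
  have hT' : MeasurePreserving T.symm μ μ := MeasurePreserving.symm T.toMeasurableEquiv hT
  have hzpow : ∀ n : ℤ, MeasurePreserving (T.toEquiv ^ n : Equiv.Perm X) μ μ :=
    zpow_induction_left (P := fun σ : Equiv.Perm X ↦ MeasurePreserving σ μ μ)
      (MeasurePreserving.id μ) (fun _ hσ ↦ hT.comp hσ) (fun _ hσ ↦ hT'.comp hσ)
  exact ⟨Subgroup.forall_zpowers.2 fun n _ hs ↦
    (hzpow n).measure_preimage hs.nullMeasurableSet⟩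

variable [MetricSpace X] {T : X ≃ₜ X}

theorem IsMinimal.isMinimal_zpowers (hT : IsMinimal T) :
    MulAction.IsMinimal (Subgroup.zpowers T.toEquiv) X := by
  refine ⟨fun x ↦ (hT x).mono ?_⟩
  rintro _ ⟨n, rfl⟩
  exact ⟨⟨T.toEquiv ^ n, n, rfl⟩, rfl⟩

theorem RP.regionallyProximal {x y : X} (hxy : RP T x y) :
    RegionallyProximal (Subgroup.zpowers T.toEquiv) x y := by
  intro V hV
  obtain ⟨ε, hε, hεV⟩ := Metric.mem_uniformity_dist.1 hV
  obtain ⟨x', y', n, hx, hy, hn⟩ := hxy ε hε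
  exact ⟨x', y', ⟨T.toEquiv ^ n, n, rfl⟩, hεV hx, hεV hy, hεV hn⟩

end ZPowers

/-- Strengthened regional proximality in minimal systems (corollary of Auslander). -/
theorem stmt5 {X : Type*} [MetricSpace X] [CompactSpace X] [Nonempty X]
    (T : X ≃ₜ X) (hmin : IsMinimal T) (x y : X) (hxy : RP T x y)
    (ε : ℝ) (hε : 0 < ε) (k : ℕ) (z : Fin k → X) :
    ∃ (z' : Fin k → X) (n : ℤ), dist (iterZ T n y) x < ε ∧
      ∀ i : Fin k, dist (z' i) (z i) < ε ∧ dist (iterZ T n (z' i)) (z i) < ε := by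
  borelize X
  obtain ⟨μ, hμ⟩ := exists_measurePreserving_of_continuous T.continuous
  have := continuousConstSMul_zpowers T
  have := smulInvariantMeasure_zpowers hμ
  have := hmin.isMinimal_zpowers
  obtain ⟨z', ⟨_, n, rfl⟩, hn⟩ := stmt5_general μ.toMeasure hxy.regionallyProximal hε z
  exact ⟨z', n, hn⟩
end

section
/- Let (X,T) be a distal minimal topological dynamical system. For (x0,x1,x2,x3,x4,x5,x6) ∈ X⁷ the following are equivalent: (1) the triples (x0,x1,x2,x3), (x0,x1,x4,x5) and (x0,x2,x4,x6) all belong to 𝒫; (2) there exists x7 ∈ X with (x0,x1,x2,x3,x4,x5,x6,x7) ∈ 𝒬; (3) there exist three sequences of integers (m_i), (n_i), (p_i) with T^{m_i} x0 → x1, T^{n_i} x0 → x2, T^{m_i+n_i} x0 → x3, T^{p_i} x0 → x4, T^{m_i+p_i} x0 → x5 and T^{n_i+p_i} x0 → x6. -/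
open Filter Topology

/-!
In a distal system the enveloping semigroup is a group (Ellis). Its construction is applied here
simultaneously to all actions of a monoid `Γ` by `T ^ φ γ`, `φ : Γ →+ ℤ`, so that it becomes a
functor of `Γ`. An element `p` for `Γ = ℤ²` has values `p₁`, `p₂`, `p₁₂` at the two coordinates and
at their sum; the values `p₁₂` with `p₁ = p₂ = 1` form a subgroup `N` of the Ellis group `E` of
`(X, T)`. It contains every commutator `⁅p, q⁆`: let `p` act along the first coordinate of `ℤ²` and
`q` along the second. In the abelian group `E ⧸ N` the values become additive in the form, so by
minimality `(x, p x, q x, y)` is a parallelogram only if `y = u q p x` for some `u ∈ N`. Given three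
such faces with corrections `u`, `v`, `w`, each of these can be realised on its own coordinate plane
of `ℤ³` without changing the coordinate values, and together they give one net in `ℤ³` along which
the orbit of `x` converges to all six points.
-/

section Ellis

variable {M : Type*} [TopologicalSpace M]

theorem mul_mem_closure_of_continuous [Mul M] {S : Set M} (hS : ∀ a ∈ S, ∀ b ∈ S, a * b ∈ S)
    (hright : ∀ r : M, Continuous (· * r)) (hleft : ∀ a ∈ S, Continuous (a * ·))
    {a b : M} (ha : a ∈ closure S) (hb : b ∈ closure S) : a * b ∈ closure S := by
  have mul_right_mem : ∀ s ∈ S, s * b ∈ closure S := fun s hs ↦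
    map_mem_closure (hleft s hs) hb (hS s hs)
  rw [← isClosed_closure.closure_eq]
  exact map_mem_closure (f := (· * b)) (hright b) ha mul_right_mem

theorem isUnit_of_compact_of_continuous_mul_right [Monoid M] [IsLeftCancelMul M] [CompactSpace M]
    [T2Space M] (hright : ∀ r : M, Continuous (· * r)) (a : M) : IsUnit a := by
  obtain ⟨_, ⟨b, rfl⟩, hidem⟩ := exists_idempotent_in_compact_subsemigroup hright
    (Set.range (· * a)) (Set.range_nonempty _) (isCompact_range (hright a)) (by
      rintro _ ⟨c, rfl⟩ _ ⟨d, rfl⟩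
      exact ⟨c * a * d, mul_assoc _ _ _⟩)
  have hba : b * a = 1 := mul_eq_left.1 hidem
  have hab : a * b = 1 := mul_left_cancel (a := b) (by rw [← mul_assoc, hba, one_mul, mul_one])
  exact ⟨⟨a, b, hab, hba⟩, rfl⟩

end Ellis

section EnvelopingMonoid

variable {X : Type*} [TopologicalSpace X] (T : X ≃ₜ X)

theorem iterZ_add (m n : ℤ) (x : X) : iterZ T (m + n) x = iterZ T m (iterZ T n x) := by
  simp only [iterZ, zpow_add, Equiv.Perm.mul_apply]

theorem iterZ_zero (x : X) : iterZ T 0 x = x := by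
  simp only [iterZ, zpow_zero, Equiv.Perm.one_apply]

theorem continuous_iterZ_s13 : ∀ n : ℤ, Continuous (iterZ T n)
  | .ofNat k => by
    change Continuous ⇑(T.toEquiv ^ (k : ℤ))
    rw [zpow_natCast, ← Equiv.Perm.iterate_eq_pow]
    exact T.continuous.iterate k
  | .negSucc k => by
    change Continuous ⇑(T.toEquiv ^ Int.negSucc k)
    rw [zpow_negSucc, ← inv_pow, ← Equiv.Perm.iterate_eq_pow]
    exact T.symm.continuous.iterate (k + 1)

/-- Self-maps carry the topology of pointwise convergence, as in the definition of the enveloping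
semigroup. -/
instance : TopologicalSpace (Function.End X) := Pi.topologicalSpace

instance [T2Space X] : T2Space (Function.End X) := inferInstanceAs (T2Space (X → X))

instance [CompactSpace X] : CompactSpace (Function.End X) :=
  inferInstanceAs (CompactSpace (X → X))

variable (Γ : Type*) [AddMonoid Γ]

/-- The enveloping monoid of the action of `Γ` on the disjoint union of copies of `X`, one for each
`φ : Γ →+ ℤ`, in which `γ` acts on the copy `φ` by `T ^ φ γ`. An element records limits of the maps
`T ^ φ γ` taken along one net in `Γ` simultaneously for all `φ`. -/
def envelopingMonoid : Submonoid ((Γ →+ ℤ) → Function.End X) where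
  carrier := closure (Set.range fun γ (φ : Γ →+ ℤ) ↦ (iterZ T (φ γ) : Function.End X))
  one_mem' := subset_closure ⟨0, by
    ext φ x
    simp only [map_zero, iterZ_zero]
    rfl⟩
  mul_mem' := by
    refine mul_mem_closure_of_continuous ?_ ?_ ?_
    · rintro _ ⟨γ, rfl⟩ _ ⟨δ, rfl⟩
      refine ⟨γ + δ, ?_⟩
      ext φ x
      simp only [map_add, iterZ_add]
      rfl
    · exact fun r ↦ continuous_pi fun φ ↦ continuous_pi fun x ↦
        (continuous_apply (r φ x)).comp (continuous_apply φ)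
    · rintro _ ⟨γ, rfl⟩
      exact continuous_pi fun φ ↦ continuous_pi fun x ↦
        (continuous_iterZ_s13 T (φ γ)).comp ((continuous_apply x).comp (continuous_apply φ))

namespace envelopingMonoid

variable {T Γ} {Δ : Type*} [AddMonoid Δ]

theorem continuous_apply_apply (φ : Γ →+ ℤ) (x : X) :
    Continuous fun p : envelopingMonoid T Γ ↦ p.1 φ x :=
  (continuous_apply x).comp ((continuous_apply φ).comp continuous_subtype_val)

theorem continuous_mul_right (r : envelopingMonoid T Γ) : Continuous (· * r) :=
  Continuous.subtype_mk (continuous_pi fun φ ↦ continuous_pi fun x ↦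
    continuous_apply_apply φ (r.1 φ x)) _

instance [CompactSpace X] : CompactSpace (envelopingMonoid T Γ) :=
  isCompact_iff_compactSpace.1 isClosed_closure.isCompact

variable (T) in
/-- The generator of the enveloping monoid given by `γ : Γ`. -/
def of (γ : Γ) : envelopingMonoid T Γ :=
  ⟨fun φ ↦ iterZ T (φ γ), subset_closure ⟨γ, rfl⟩⟩

theorem denseRange_of : DenseRange (of T : Γ → envelopingMonoid T Γ) := fun p ↦ by
  rw [closure_subtype, ← Set.range_comp]
  exact p.2

/-- Functoriality of the enveloping monoid in the acting monoid. -/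
def map (θ : Γ →+ Δ) : envelopingMonoid T Γ →* envelopingMonoid T Δ where
  toFun p := ⟨fun φ ↦ p.1 (φ.comp θ), map_mem_closure
    (f := fun (p : (Γ →+ ℤ) → Function.End X) (φ : Δ →+ ℤ) ↦ p (φ.comp θ))
    (continuous_pi fun _ ↦ continuous_apply _) p.2 (by
      rintro _ ⟨γ, rfl⟩
      exact ⟨θ γ, rfl⟩)⟩
  map_one' := rfl
  map_mul' _ _ := rfl

/-- An element of `envelopingMonoid T ℤ` acts on `X` through its component at the identity of `ℤ`,
so that `map φ p • x` is the value at `x` of the component of `p` at `φ`. -/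
instance : MulAction (envelopingMonoid T ℤ) X :=
  MulAction.compHom X <|
    (Pi.evalMonoidHom (fun _ ↦ Function.End X) (AddMonoidHom.id ℤ)).comp (Submonoid.subtype _)

theorem map_zero [T2Space X] (p : envelopingMonoid T Γ) : map (0 : Γ →+ Δ) p = 1 := by
  refine Subtype.ext (funext fun φ ↦ funext fun x ↦ ?_)
  exact denseRange_of.induction_on (p := fun p ↦ (map (0 : Γ →+ Δ) p).1 φ x = x) p
    (isClosed_eq (continuous_apply_apply _ x) continuous_const) fun _ ↦
      (congrArg (iterZ T · x) φ.map_zero).trans (iterZ_zero T x)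

end envelopingMonoid

/-- The group of invertible elements of the enveloping monoid, which for distal `T` is all of it
(`IsDistal.isUnit`). For `Γ = ℤ` it is the Ellis group of `(X, T)`. -/
abbrev ellisGroup := (envelopingMonoid T Γ)ˣ

namespace ellisGroup

variable {T Γ} {Δ Λ : Type*} [AddMonoid Δ] [AddMonoid Λ]

/-- Functoriality of the Ellis group in the acting monoid. -/
def map (θ : Γ →+ Δ) : ellisGroup T Γ →* ellisGroup T Δ :=
  Units.map (envelopingMonoid.map θ)

theorem map_id (p : ellisGroup T Γ) : map (AddMonoidHom.id Γ) p = p := rfl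

theorem map_map (η : Δ →+ Λ) (θ : Γ →+ Δ) (p : ellisGroup T Γ) :
    map η (map θ p) = map (η.comp θ) p := rfl

theorem map_zero [T2Space X] (p : ellisGroup T Γ) : map (0 : Γ →+ Δ) p = 1 :=
  Units.ext (envelopingMonoid.map_zero p.1)

end ellisGroup

end EnvelopingMonoid

open AddMonoidHom

open scoped commutatorElement

section AdditivityDefect

/-- The first coordinate form on `ℤ³`. -/
abbrev coord₁ : ℤ × ℤ × ℤ →+ ℤ := fst ℤ (ℤ × ℤ)

/-- The second coordinate form on `ℤ³`. -/
abbrev coord₂ : ℤ × ℤ × ℤ →+ ℤ := (fst ℤ ℤ).comp (snd ℤ (ℤ × ℤ))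

/-- The third coordinate form on `ℤ³`. -/
abbrev coord₃ : ℤ × ℤ × ℤ →+ ℤ := (snd ℤ ℤ).comp (snd ℤ (ℤ × ℤ))

variable {X : Type*} [TopologicalSpace X] {T : X ≃ₜ X}

namespace ellisGroup

/-- The subgroup of limits of `T ^ (m i + n i)` along nets for which `T ^ m i` and `T ^ n i` tend
to the identity. It measures how far the components of an element of an Ellis group are from being
additive in the form `φ`. -/
def additivityDefect (T : X ≃ₜ X) : Subgroup (ellisGroup T ℤ) :=
  ((map (fst ℤ ℤ)).ker ⊓ (map (snd ℤ ℤ)).ker).map (map (fst ℤ ℤ + snd ℤ ℤ))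

theorem mem_additivityDefect {u : ellisGroup T ℤ} : u ∈ additivityDefect T ↔
    ∃ p : ellisGroup T (ℤ × ℤ),
      map (fst ℤ ℤ) p = 1 ∧ map (snd ℤ ℤ) p = 1 ∧ map (fst ℤ ℤ + snd ℤ ℤ) p = u := by
  simp only [additivityDefect, Subgroup.mem_map, Subgroup.mem_inf, MonoidHom.mem_ker, and_assoc]

variable [T2Space X]

theorem map_add_div_mem_additivityDefect {Γ : Type*} [AddMonoid Γ] (φ ψ : Γ →+ ℤ)
    (p : ellisGroup T Γ) : map (φ + ψ) p / (map φ p * map ψ p) ∈ additivityDefect T := by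
  refine mem_additivityDefect.2
    ⟨map (φ.prod ψ) p / (map ((inl ℤ ℤ).comp φ) p * map ((inr ℤ ℤ).comp ψ) p), ?_⟩
  simp [map_map, ← comp_assoc, add_comp, map_zero]

theorem commutator_le_additivityDefect :
    commutator (ellisGroup T ℤ) ≤ additivityDefect T := by
  refine Subgroup.commutator_le.2 fun p _ q _ ↦ mem_additivityDefect.2
    ⟨⁅map (inl ℤ ℤ) p, map (inr ℤ ℤ) q⁆, ?_⟩
  simp [map_commutatorElement, map_map, add_comp, map_zero, map_id]

instance : (additivityDefect T).Normal :=
  Subgroup.Normal.of_commutator_le (G := ellisGroup T ℤ) commutator_le_additivityDefect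

instance : IsMulCommutative (ellisGroup T ℤ ⧸ additivityDefect T) :=
  Subgroup.Normal.quotient_commutative_iff_commutator_le.2 commutator_le_additivityDefect

theorem mk_map_add_div {Γ : Type*} [AddMonoid Γ] (φ ψ : Γ →+ ℤ) (p : ellisGroup T Γ) :
    (↑(map (φ + ψ) p / map ψ p) : ellisGroup T ℤ ⧸ additivityDefect T) = map φ p := by
  rw [QuotientGroup.eq_iff_div_mem, ← div_mul_eq_div_div_swap]
  exact map_add_div_mem_additivityDefect φ ψ p

theorem exists_map_eq_of_mem_additivityDefect (p q s : ellisGroup T ℤ) {u v w : ellisGroup T ℤ}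
    (hu : u ∈ additivityDefect T) (hv : v ∈ additivityDefect T) (hw : w ∈ additivityDefect T) :
    ∃ h : ellisGroup T (ℤ × ℤ × ℤ),
      map coord₁ h = p ∧ map coord₂ h = q ∧ map (coord₁ + coord₂) h = u * q * p ∧
      map coord₃ h = s ∧ map (coord₁ + coord₃) h = v * s * p ∧
      map (coord₂ + coord₃) h = w * s * q := by
  obtain ⟨u', hu₁, hu₂, hu⟩ := mem_additivityDefect.1 hu
  obtain ⟨v', hv₁, hv₂, hv⟩ := mem_additivityDefect.1 hv
  obtain ⟨w', hw₁, hw₂, hw⟩ := mem_additivityDefect.1 hw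
  -- The first three factors are trivial at every `coordᵢ`, and each corrects one face.
  refine ⟨map ((fst ℤ ℤ).prod ((snd ℤ ℤ).prod 0)) u' *
    map ((fst ℤ ℤ).prod (.prod 0 (snd ℤ ℤ))) v' *
    map (.prod 0 ((fst ℤ ℤ).prod (snd ℤ ℤ))) w' *
    map (.prod 0 (.prod 0 (.id ℤ))) s * map (.prod 0 (.prod (.id ℤ) 0)) q *
    map (.prod (.id ℤ) 0) p, ?_⟩
  simp [coord₁, coord₂, coord₃, map_map, add_comp, comp_assoc, map_zero, map_id, *]

end ellisGroup

end AdditivityDefect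

section Distal

variable {X : Type*} [MetricSpace X] {T : X ≃ₜ X} {Γ : Type*} [AddMonoid Γ]

theorem IsDistal.injective_apply (hT : IsDistal T) (p : envelopingMonoid T Γ) (φ : Γ →+ ℤ) :
    Function.Injective (p.1 φ) := by
  intro x y hxy
  by_contra hne
  have hbdd : BddBelow (Set.range fun n : ℤ ↦ dist (iterZ T n x) (iterZ T n y)) :=
    ⟨0, Set.forall_mem_range.2 fun _ ↦ dist_nonneg⟩
  have hle : ⨅ n : ℤ, dist (iterZ T n x) (iterZ T n y) ≤ dist (p.1 φ x) (p.1 φ y) :=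
    envelopingMonoid.denseRange_of.induction_on p
      (isClosed_le continuous_const ((envelopingMonoid.continuous_apply_apply φ x).dist
        (envelopingMonoid.continuous_apply_apply φ y)))
      fun γ ↦ ciInf_le hbdd (φ γ)
  rw [hxy, dist_self] at hle
  exact (hT x y hne).not_ge hle

theorem IsDistal.isLeftCancelMul (hT : IsDistal T) : IsLeftCancelMul (envelopingMonoid T Γ) where
  mul_left_cancel p q r h := by
    refine Subtype.ext (funext fun φ ↦ funext fun x ↦ hT.injective_apply p φ ?_)
    exact congrFun (congrFun (congrArg Subtype.val h) φ) x

theorem IsDistal.isUnit [CompactSpace X] (hT : IsDistal T) (p : envelopingMonoid T Γ) :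
    IsUnit p :=
  have := hT.isLeftCancelMul (Γ := Γ)
  isUnit_of_compact_of_continuous_mul_right envelopingMonoid.continuous_mul_right p

theorem IsDistal.closure_range_iterZ_eq [CompactSpace X] {Y : Type*} [TopologicalSpace Y]
    [T2Space Y] (hT : IsDistal T) {F : ((Γ →+ ℤ) → X) → Y} (hF : Continuous F) (x : X) :
    closure (Set.range fun γ ↦ F fun φ ↦ iterZ T (φ γ) x) =
      Set.range fun p : ellisGroup T Γ ↦ F fun φ ↦ ellisGroup.map φ p • x := by
  let f : envelopingMonoid T Γ → Y := fun p ↦ F fun φ ↦ p.1 φ x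
  have hf : Continuous f :=
    hF.comp (continuous_pi fun φ ↦ envelopingMonoid.continuous_apply_apply φ x)
  have units_val_surjective : Function.Surjective (Units.val : ellisGroup T Γ → _) := hT.isUnit
  calc closure (Set.range (f ∘ envelopingMonoid.of T))
    _ = f '' closure (Set.range (envelopingMonoid.of T)) := by
      rw [Set.range_comp, image_closure_of_isCompact isClosed_closure.isCompact hf.continuousOn]
    _ = Set.range (f ∘ Units.val) := by
      rw [envelopingMonoid.denseRange_of.closure_range, Set.image_univ,
        units_val_surjective.range_comp]

theorem IsMinimal.exists_smul_eq [CompactSpace X] (hmin : IsMinimal T) (hT : IsDistal T)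
    (x y : X) : ∃ p : ellisGroup T ℤ, p • x = y :=
  (hT.closure_range_iterZ_eq (continuous_apply (AddMonoidHom.id ℤ)) x).subset (hmin x y)

end Distal

section Para

open ellisGroup (map additivityDefect mk_map_add_div exists_map_eq_of_mem_additivityDefect)

variable {X : Type*} [MetricSpace X] {T : X ≃ₜ X}

theorem IsMinimal.para_subset_closure (hmin : IsMinimal T) (x : X) :
    Para T ⊆ closure (Set.range fun γ : ℤ × ℤ × ℤ ↦
      (iterZ T γ.1 x, iterZ T (γ.2.1 + γ.1) x, iterZ T (γ.2.2 + γ.1) x,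
        iterZ T (γ.2.1 + (γ.2.2 + γ.1)) x)) := by
  refine closure_minimal ?_ isClosed_closure
  rintro _ ⟨y, m, n, rfl⟩
  refine map_mem_closure (f := fun y ↦ (y, iterZ T m y, iterZ T n y, iterZ T (m + n) y))
    (continuous_id.prodMk <| (continuous_iterZ_s13 T m).prodMk <|
      (continuous_iterZ_s13 T n).prodMk (continuous_iterZ_s13 T (m + n))) (hmin x y) ?_
  rintro _ ⟨k, rfl⟩
  exact ⟨(k, m, n), by simp only [iterZ_add]⟩

variable [CompactSpace X]

theorem exists_map_smul_eq_of_mem_para (hT : IsDistal T) (hmin : IsMinimal T)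
    {x₀ x₁ x₂ x₃ : X} (h : (x₀, x₁, x₂, x₃) ∈ Para T) :
    ∃ a : ellisGroup T (ℤ × ℤ × ℤ), map coord₁ a • x₀ = x₀ ∧
      map (coord₂ + coord₁) a • x₀ = x₁ ∧
      map (coord₃ + coord₁) a • x₀ = x₂ ∧
      map (coord₂ + (coord₃ + coord₁)) a • x₀ = x₃ := by
  have hF : Continuous fun g : (ℤ × ℤ × ℤ →+ ℤ) → X ↦
      (g coord₁, g (coord₂ + coord₁), g (coord₃ + coord₁), g (coord₂ + (coord₃ + coord₁))) := by
    fun_prop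
  obtain ⟨a, ha⟩ := (hT.closure_range_iterZ_eq hF x₀).subset (hmin.para_subset_closure x₀ h)
  exact ⟨a, by simpa only [Prod.mk.injEq] using ha⟩

theorem exists_mem_additivityDefect_of_mem_para (hT : IsDistal T) (hmin : IsMinimal T)
    {p q : ellisGroup T ℤ} {x y : X} (h : (x, p • x, q • x, y) ∈ Para T) :
    ∃ u ∈ additivityDefect T, (u * q * p) • x = y := by
  obtain ⟨a, h₀, h₁, h₂, h₃⟩ := exists_map_smul_eq_of_mem_para hT hmin h
  refine ⟨map (coord₂ + (coord₃ + coord₁)) a / map (coord₃ + coord₁) a * q *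
    (map (coord₂ + coord₁) a / map coord₁ a)⁻¹ * q⁻¹, ?_, ?_⟩
  · rw [← QuotientGroup.eq_one_iff]
    simp only [QuotientGroup.mk_mul, QuotientGroup.mk_inv, mk_map_add_div]
    rw [mul_comm' (QuotientGroup.mk (map coord₂ a)) (QuotientGroup.mk q),
      mul_inv_cancel_right, mul_inv_cancel]
  · have h₁' : (map (coord₂ + coord₁) a)⁻¹ • p • x = x := inv_smul_eq_iff.2 h₁.symm
    have h₂' : (map (coord₃ + coord₁) a)⁻¹ • q • x = x := inv_smul_eq_iff.2 h₂.symm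
    simp only [mul_smul, div_eq_mul_inv, mul_inv_rev, inv_inv, inv_smul_smul, h₁', h₀, h₂', h₃]

theorem exists_tendsto_of_mem_para (hT : IsDistal T) (hmin : IsMinimal T)
    {x₀ x₁ x₂ x₃ x₄ x₅ x₆ : X} (h₁₂ : (x₀, x₁, x₂, x₃) ∈ Para T)
    (h₁₄ : (x₀, x₁, x₄, x₅) ∈ Para T) (h₂₄ : (x₀, x₂, x₄, x₆) ∈ Para T) :
    ∃ m n p : ℕ → ℤ,
      Tendsto (fun i ↦ iterZ T (m i) x₀) atTop (𝓝 x₁) ∧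
      Tendsto (fun i ↦ iterZ T (n i) x₀) atTop (𝓝 x₂) ∧
      Tendsto (fun i ↦ iterZ T (m i + n i) x₀) atTop (𝓝 x₃) ∧
      Tendsto (fun i ↦ iterZ T (p i) x₀) atTop (𝓝 x₄) ∧
      Tendsto (fun i ↦ iterZ T (m i + p i) x₀) atTop (𝓝 x₅) ∧
      Tendsto (fun i ↦ iterZ T (n i + p i) x₀) atTop (𝓝 x₆) := by
  obtain ⟨p, rfl⟩ := hmin.exists_smul_eq hT x₀ x₁
  obtain ⟨q, rfl⟩ := hmin.exists_smul_eq hT x₀ x₂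
  obtain ⟨s, rfl⟩ := hmin.exists_smul_eq hT x₀ x₄
  obtain ⟨u, hu, rfl⟩ := exists_mem_additivityDefect_of_mem_para hT hmin h₁₂
  obtain ⟨v, hv, rfl⟩ := exists_mem_additivityDefect_of_mem_para hT hmin h₁₄
  obtain ⟨w, hw, rfl⟩ := exists_mem_additivityDefect_of_mem_para hT hmin h₂₄
  obtain ⟨h, h₁, h₂, h₃, h₄, h₅, h₆⟩ :=
    exists_map_eq_of_mem_additivityDefect p q s hu hv hw
  have hF : Continuous fun g : (ℤ × ℤ × ℤ →+ ℤ) → X ↦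
      (g coord₁, g coord₂, g (coord₁ + coord₂), g coord₃, g (coord₁ + coord₃),
        g (coord₂ + coord₃)) := by
    fun_prop
  obtain ⟨z, hz, htendsto⟩ := mem_closure_iff_seq_limit.1
    ((hT.closure_range_iterZ_eq hF x₀).superset ⟨h, rfl⟩)
  choose γ hγ using hz
  obtain rfl := funext hγ
  simp only [h₁, h₂, h₃, h₄, h₅, h₆, Prod.tendsto_iff] at htendsto
  exact ⟨fun i ↦ coord₁ (γ i), fun i ↦ coord₂ (γ i), fun i ↦ coord₃ (γ i), htendsto⟩

end Para

section Pip

variable {X : Type*} [TopologicalSpace X] {T : X ≃ₜ X} {x₀ x₁ x₂ x₃ x₄ x₅ x₆ : X}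

theorem exists_mem_pip_of_tendsto [CompactSpace X] {ι : Type*} {l : Filter ι} [l.NeBot]
    {m n p : ι → ℤ} (h₁ : Tendsto (fun i ↦ iterZ T (m i) x₀) l (𝓝 x₁))
    (h₂ : Tendsto (fun i ↦ iterZ T (n i) x₀) l (𝓝 x₂))
    (h₃ : Tendsto (fun i ↦ iterZ T (m i + n i) x₀) l (𝓝 x₃))
    (h₄ : Tendsto (fun i ↦ iterZ T (p i) x₀) l (𝓝 x₄))
    (h₅ : Tendsto (fun i ↦ iterZ T (m i + p i) x₀) l (𝓝 x₅))
    (h₆ : Tendsto (fun i ↦ iterZ T (n i + p i) x₀) l (𝓝 x₆)) :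
    ∃ x₇ : X, ((x₀, x₁, x₂, x₃), (x₄, x₅, x₆, x₇)) ∈ Pip T := by
  let f (i : ι) : X := iterZ T (m i + n i + p i) x₀
  obtain ⟨x₇, -, h₇⟩ := isCompact_univ.ultrafilter_le_nhds ((Ultrafilter.of l).map f) (by simp)
  refine ⟨x₇, mem_closure_of_tendsto (b := (Ultrafilter.of l : Filter ι)) ?_
    (.of_forall fun i ↦ ⟨x₀, m i, n i, p i, rfl⟩)⟩
  have hle : (Ultrafilter.of l : Filter ι) ≤ l := Ultrafilter.of_le l
  exact (tendsto_const_nhds.prodMk_nhds <| (h₁.mono_left hle).prodMk_nhds <|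
      (h₂.mono_left hle).prodMk_nhds (h₃.mono_left hle)).prodMk_nhds <|
    (h₄.mono_left hle).prodMk_nhds <| (h₅.mono_left hle).prodMk_nhds <|
      (h₆.mono_left hle).prodMk_nhds h₇

theorem mem_para_of_mem_pip {x₇ : X} (h : ((x₀, x₁, x₂, x₃), (x₄, x₅, x₆, x₇)) ∈ Pip T) :
    (x₀, x₁, x₂, x₃) ∈ Para T ∧ (x₀, x₁, x₄, x₅) ∈ Para T ∧ (x₀, x₂, x₄, x₆) ∈ Para T := by
  refine ⟨map_mem_closure (f := fun c : (X × X × X × X) × (X × X × X × X) ↦ c.1)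
      continuous_fst h ?_,
    map_mem_closure (f := fun c : (X × X × X × X) × (X × X × X × X) ↦
      (c.1.1, c.1.2.1, c.2.1, c.2.2.1)) (by fun_prop) h ?_,
    map_mem_closure (f := fun c : (X × X × X × X) × (X × X × X × X) ↦
      (c.1.1, c.1.2.2.1, c.2.1, c.2.2.2.1)) (by fun_prop) h ?_⟩
  all_goals rintro _ ⟨x, m, n, p, rfl⟩
  exacts [⟨x, m, n, rfl⟩, ⟨x, m, p, rfl⟩, ⟨x, n, p, rfl⟩]

end Pip

/-- Completion of parallelepipeds in a distal minimal system: equivalent conditions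
on a 7-tuple. -/
theorem stmt13 {X : Type*} [MetricSpace X] [CompactSpace X] [Nonempty X]
    (T : X ≃ₜ X) (hdistal : IsDistal T) (hmin : IsMinimal T)
    (x0 x1 x2 x3 x4 x5 x6 : X) :
    (((x0, x1, x2, x3) ∈ Para T ∧ (x0, x1, x4, x5) ∈ Para T ∧
        (x0, x2, x4, x6) ∈ Para T) ↔
      (∃ x7 : X, ((x0, x1, x2, x3), (x4, x5, x6, x7)) ∈ Pip T)) ∧
    ((∃ x7 : X, ((x0, x1, x2, x3), (x4, x5, x6, x7)) ∈ Pip T) ↔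
      (∃ m n p : ℕ → ℤ,
        Tendsto (fun i => iterZ T (m i) x0) atTop (𝓝 x1) ∧
        Tendsto (fun i => iterZ T (n i) x0) atTop (𝓝 x2) ∧
        Tendsto (fun i => iterZ T (m i + n i) x0) atTop (𝓝 x3) ∧
        Tendsto (fun i => iterZ T (p i) x0) atTop (𝓝 x4) ∧
        Tendsto (fun i => iterZ T (m i + p i) x0) atTop (𝓝 x5) ∧
        Tendsto (fun i => iterZ T (n i + p i) x0) atTop (𝓝 x6))) := by
  have tendsto_of_para := fun h : (x0, x1, x2, x3) ∈ Para T ∧ (x0, x1, x4, x5) ∈ Para T ∧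
      (x0, x2, x4, x6) ∈ Para T ↦
    exists_tendsto_of_mem_para hdistal hmin h.1 h.2.1 h.2.2
  refine ⟨⟨fun h ↦ ?_, fun ⟨_, h⟩ ↦ mem_para_of_mem_pip h⟩,
    fun ⟨_, h⟩ ↦ tendsto_of_para (mem_para_of_mem_pip h), ?_⟩
  · obtain ⟨_, _, _, h₁, h₂, h₃, h₄, h₅, h₆⟩ := tendsto_of_para h
    exact exists_mem_pip_of_tendsto h₁ h₂ h₃ h₄ h₅ h₆
  · rintro ⟨_, _, _, h₁, h₂, h₃, h₄, h₅, h₆⟩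
    exact exists_mem_pip_of_tendsto h₁ h₂ h₃ h₄ h₅ h₆
end
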